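/- arXiv:2012.11640 — 6 statements merged into one kernel-verified Lean document; each statement's English description precedes it below -/
import Mathlib

section
/- Let 𝔤 be a finite-dimensional real Lie algebra equipped with an inner product, let 𝔥 be a Lie subalgebra of 𝔤, let 𝔭 be the orthogonal complement of 𝔥 in 𝔤, and let x ∈ 𝔭 be nonzero. Then dim Z_𝔭(x) is the least natural number b with the following property: every orthonormal family y₁, …, y_b of vectors in 𝔭, each orthogonal to x, contains some index i with [x,y_i] ≠ 0. -/
open Module

/-!
Let `Z` be the centralizer of `x` in `𝔭`; it contains `x`, as `⁅x, x⁆ = 0`. The orthonormal families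
that violate the defining property of `b` are exactly those of length `b` in the hyperplane
`xᗮ ⊓ Z` of `Z`. This hyperplane has dimension `dim Z - 1`, so such a family exists if and only if
`b < dim Z`.
-/

section InnerProductSpace

variable {𝕜 E ι : Type*} [RCLike 𝕜] [NormedAddCommGroup E] [InnerProductSpace 𝕜 E] [Fintype ι]

theorem exists_orthonormal_iff_card_le_finrank [FiniteDimensional 𝕜 E] :
    (∃ v : ι → E, Orthonormal 𝕜 v) ↔ Fintype.card ι ≤ finrank 𝕜 E := by
  constructor
  · rintro ⟨v, hv⟩
    exact hv.linearIndependent.fintype_card_le_finrank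
  · intro hcard
    obtain ⟨f⟩ : Nonempty (ι ↪ Fin (finrank 𝕜 E)) :=
      Function.Embedding.nonempty_of_card_le (by rwa [Fintype.card_fin])
    exact ⟨_, (stdOrthonormalBasis 𝕜 E).orthonormal.comp f f.injective⟩

variable {K : Submodule 𝕜 E} [FiniteDimensional 𝕜 K]

theorem exists_orthonormal_mem_iff_card_le_finrank :
    (∃ v : ι → E, (∀ i, v i ∈ K) ∧ Orthonormal 𝕜 v) ↔ Fintype.card ι ≤ finrank 𝕜 K := by
  rw [← exists_orthonormal_iff_card_le_finrank]
  constructor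
  · rintro ⟨v, hvK, hv⟩
    exact ⟨_, hv.codRestrict K hvK⟩
  · rintro ⟨v, hv⟩
    exact ⟨_, fun i ↦ (v i).2, hv.comp_linearIsometry K.subtypeₗᵢ⟩

variable {x : E}

theorem finrank_orthogonal_span_singleton_inf_add_one (hxK : x ∈ K) (hx : x ≠ 0) :
    finrank 𝕜 ↥((𝕜 ∙ x)ᗮ ⊓ K) + 1 = finrank 𝕜 K := by
  rw [← Submodule.finrank_add_inf_finrank_orthogonal
    ((Submodule.span_singleton_le_iff_mem x K).2 hxK), finrank_span_singleton hx, add_comm]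

theorem exists_orthonormal_mem_inner_eq_zero_iff_card_lt_finrank (hxK : x ∈ K) (hx : x ≠ 0) :
    (∃ v : ι → E, (∀ i, v i ∈ K) ∧ Orthonormal 𝕜 v ∧ ∀ i, inner 𝕜 (v i) x = 0) ↔
      Fintype.card ι < finrank 𝕜 K := by
  have : FiniteDimensional 𝕜 ↥((𝕜 ∙ x)ᗮ ⊓ K) := Submodule.finiteDimensional_inf_right _ _
  rw [← finrank_orthogonal_span_singleton_inf_add_one hxK hx, Nat.lt_succ_iff,
    ← exists_orthonormal_mem_iff_card_le_finrank]
  simp only [Submodule.mem_inf, Submodule.mem_orthogonal_singleton_iff_inner_left, forall_and]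
  exact exists_congr fun v ↦ by tauto

end InnerProductSpace

section BilinForm

variable {V : Type*} [AddCommGroup V] [Module ℝ V]

/-- The inner product given by a symmetric positive definite bilinear form. It is kept as a `Core`
so that the norm it induces is only put on `V` locally, inside proofs. -/
abbrev innerProductCoreOfPosDef (B : LinearMap.BilinForm ℝ V) (hsymm : ∀ x y : V, B x y = B y x)
    (hposdef : ∀ x : V, x ≠ 0 → 0 < B x x) : InnerProductSpace.Core ℝ V where
  inner x y := B x y
  conj_inner_symm x y := hsymm y x
  re_inner_nonneg x := by
    rcases eq_or_ne x 0 with rfl | hx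
    · simp
    · exact (hposdef x hx).le
  add_left x y z := by simp
  smul_left x y r := by simp
  definite x hxx := by
    by_contra hx
    exact (hposdef x hx).ne' hxx

theorem exists_orthonormal_mem_bilinForm_eq_zero_iff_card_lt_finrank {ι : Type*} [Fintype ι]
    [DecidableEq ι] (B : LinearMap.BilinForm ℝ V) (hsymm : ∀ x y : V, B x y = B y x)
    (hposdef : ∀ x : V, x ≠ 0 → 0 < B x x) {K : Submodule ℝ V} [FiniteDimensional ℝ K] {x : V}
    (hxK : x ∈ K) (hx : x ≠ 0) :
    (∃ v : ι → V, (∀ i, v i ∈ K) ∧ (∀ i j, B (v i) (v j) = if i = j then 1 else 0) ∧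
      ∀ i, B (v i) x = 0) ↔ Fintype.card ι < finrank ℝ K := by
  let core := innerProductCoreOfPosDef B hsymm hposdef
  let _ : NormedAddCommGroup V := core.toNormedAddCommGroup
  let _ : InnerProductSpace ℝ V := .ofCore core.toCore
  rw [← exists_orthonormal_mem_inner_eq_zero_iff_card_lt_finrank hxK hx]
  simp only [orthonormal_iff_ite]
  rfl

variable {W : Type*} [AddCommGroup W] [Module ℝ W]

theorem forall_orthonormal_exists_apply_ne_zero_iff_finrank_le_card {ι : Type*} [Fintype ι]
    [DecidableEq ι] (B : LinearMap.BilinForm ℝ V) (hsymm : ∀ x y : V, B x y = B y x)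
    (hposdef : ∀ x : V, x ≠ 0 → 0 < B x x) (T : V →ₗ[ℝ] W) (P : Submodule ℝ V)
    [FiniteDimensional ℝ ↥(P ⊓ LinearMap.ker T)] {x : V} (hxP : x ∈ P) (hTx : T x = 0)
    (hx : x ≠ 0) :
    (∀ y : ι → V, (∀ i, y i ∈ P) → (∀ i j, B (y i) (y j) = if i = j then 1 else 0) →
      (∀ i, B (y i) x = 0) → ∃ i, T (y i) ≠ 0) ↔
      finrank ℝ ↥(P ⊓ LinearMap.ker T) ≤ Fintype.card ι := by
  have hxZ : x ∈ P ⊓ LinearMap.ker T := ⟨hxP, hTx⟩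
  rw [← not_lt,
    ← exists_orthonormal_mem_bilinForm_eq_zero_iff_card_lt_finrank B hsymm hposdef hxZ hx]
  simp only [Submodule.mem_inf, LinearMap.mem_ker, forall_and, not_exists, ne_eq, ← not_forall]
  exact forall_congr' fun y ↦ by tauto

end BilinForm

theorem statement1_general {V W : Type*} [AddCommGroup V] [Module ℝ V] [AddCommGroup W]
    [Module ℝ W] (B : LinearMap.BilinForm ℝ V) (hsymm : ∀ x y : V, B x y = B y x)
    (hposdef : ∀ x : V, x ≠ 0 → 0 < B x x) (T : V →ₗ[ℝ] W) (P : Submodule ℝ V)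
    [FiniteDimensional ℝ ↥(P ⊓ LinearMap.ker T)] {x : V} (hxP : x ∈ P) (hTx : T x = 0)
    (hx : x ≠ 0) :
    IsLeast
      {b : ℕ | ∀ y : Fin b → V,
        (∀ i, y i ∈ P) →
        (∀ i j, B (y i) (y j) = if i = j then 1 else 0) →
        (∀ i, B (y i) x = 0) →
        ∃ i, T (y i) ≠ 0}
      (finrank ℝ ↥(P ⊓ LinearMap.ker T)) := by
  have hiff (b : ℕ) := forall_orthonormal_exists_apply_ne_zero_iff_finrank_le_card (ι := Fin b)
    B hsymm hposdef T P hxP hTx hx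
  simp only [Fintype.card_fin] at hiff
  exact ⟨(hiff _).2 le_rfl, fun b hb ↦ (hiff b).1 hb⟩

/-- Let `𝔤` be a finite-dimensional real Lie algebra with an inner product
`B`, `𝔥` a Lie subalgebra, `𝔭` the orthogonal complement of `𝔥`, and `x ∈ 𝔭` nonzero.
Then `dim Z_𝔭(x)` is the least natural number `b` such that every orthonormal family
`y₁, …, y_b` of vectors of `𝔭`, each orthogonal to `x`, contains some `i` with
`⁅x, y i⁆ ≠ 0`. -/
theorem statement1 {𝔤 : Type*} [LieRing 𝔤] [LieAlgebra ℝ 𝔤] [Module.Finite ℝ 𝔤]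
    (B : LinearMap.BilinForm ℝ 𝔤)
    (hsymm : ∀ x y : 𝔤, B x y = B y x)
    (hposdef : ∀ x : 𝔤, x ≠ 0 → 0 < B x x)
    (𝔥 : LieSubalgebra ℝ 𝔤)
    (𝔭 : Submodule ℝ 𝔤) (h𝔭 : 𝔭 = LinearMap.BilinForm.orthogonal B 𝔥.toSubmodule)
    (x : 𝔤) (hx𝔭 : x ∈ 𝔭) (hx : x ≠ 0) :
    IsLeast
      {b : ℕ | ∀ y : Fin b → 𝔤,
        (∀ i, y i ∈ 𝔭) →
        (∀ i j, B (y i) (y j) = if i = j then 1 else 0) →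
        (∀ i, B (y i) x = 0) →
        ∃ i, ⁅x, y i⁆ ≠ 0}
      (finrank ℝ ↥(𝔭 ⊓ LinearMap.ker (LieAlgebra.ad ℝ 𝔤 x))) := by
  exact statement1_general B hsymm hposdef (LieAlgebra.ad ℝ 𝔤 x) 𝔭 hx𝔭 (lie_self x) hx
end

section
/- Let 𝔤 be a finite-dimensional real Lie algebra equipped with an invariant inner product, and let 𝔥 ⊆ 𝔨 ⊊ 𝔤 be nested Lie subalgebras. Then max over nonzero x in 𝔨^⊥ of dim Z_{𝔨^⊥}(x) is at most max over nonzero x in 𝔥^⊥ of dim Z_{𝔥^⊥}(x); that is, b(𝔤,𝔨) ≤ b(𝔤,𝔥). -/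
open Module

/-- For a Lie subalgebra with underlying submodule `𝔥` of a real Lie algebra `𝔤` with an
inner product `B`, `bInv B 𝔥` is the maximum, over nonzero `x` in the orthogonal complement
`𝔭 = 𝔥^⊥`, of the dimension of the centralizer `Z_𝔭(x) = {y ∈ 𝔭 : ⁅x,y⁆ = 0}`.  For a normal
homogeneous space `G/H` this is the invariant `b(G/H)`. -/
noncomputable def bInv {𝔤 : Type*} [LieRing 𝔤] [LieAlgebra ℝ 𝔤]
    (B : LinearMap.BilinForm ℝ 𝔤) (𝔥 : Submodule ℝ 𝔤) : ℕ :=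
  sSup {n : ℕ | ∃ x : 𝔤, x ∈ LinearMap.BilinForm.orthogonal B 𝔥 ∧ x ≠ 0 ∧
    n = finrank ℝ ↥(LinearMap.BilinForm.orthogonal B 𝔥 ⊓
      LinearMap.ker (LieAlgebra.ad ℝ 𝔤 x))}

/-!
Passing from `𝔥` to a larger `𝔨` shrinks the orthogonal complement, `𝔨^⊥ ≤ 𝔥^⊥`, and with it the
centralizer of each `x ∈ 𝔨^⊥`. An `x` realizing the maximum for `𝔨` is therefore a competitor in
the maximum for `𝔥`, with at least as large a centralizer. The supremum defining `bInv` is an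
honest maximum, rather than the junk value `0`, when the complement is nonzero and
finite-dimensional; for proper `𝔨` in a finite-dimensional `𝔤`, a dimension count gives `𝔨^⊥ ≠ 0`.
-/

/-- The centralizer `Z_𝔭(x)` of `x` in `𝔭`. It is defined for a mere subspace `𝔭`, which need not
contain `x`, because the orthogonal complement of a subalgebra is in general not a subalgebra. -/
def centralizerIn {R L : Type*} [CommRing R] [LieRing L] [LieAlgebra R L]
    (𝔭 : Submodule R L) (x : L) : Submodule R L :=
  𝔭 ⊓ LinearMap.ker (LieAlgebra.ad R L x)

theorem centralizerIn_mono {R L : Type*} [CommRing R] [LieRing L] [LieAlgebra R L]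
    {𝔭 𝔮 : Submodule R L} (h : 𝔭 ≤ 𝔮) (x : L) : centralizerIn 𝔭 x ≤ centralizerIn 𝔮 x :=
  inf_le_inf_right _ h

instance centralizerIn.instFinite {K L : Type*} [Field K] [LieRing L] [LieAlgebra K L]
    (𝔭 : Submodule K L) [Module.Finite K 𝔭] (x : L) : Module.Finite K (centralizerIn 𝔭 x) :=
  Submodule.finiteDimensional_inf_left _ _

theorem finrank_centralizerIn_le {K L : Type*} [Field K] [LieRing L] [LieAlgebra K L]
    (𝔭 : Submodule K L) [Module.Finite K 𝔭] (x : L) :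
    finrank K (centralizerIn 𝔭 x) ≤ finrank K 𝔭 :=
  Submodule.finrank_mono inf_le_left

theorem bilinForm_orthogonal_ne_bot {K V : Type*} [Field K] [AddCommGroup V] [Module K V]
    [Module.Finite K V] (B : LinearMap.BilinForm K V) {W : Submodule K V} (hW : W ≠ ⊤) :
    B.orthogonal W ≠ ⊥ := by
  intro hbot
  have hdim := B.finrank_add_finrank_orthogonal' W
  rw [hbot, finrank_bot] at hdim
  have hlt := Submodule.finrank_lt hW
  lia

section

variable {𝔤 : Type*} [LieRing 𝔤] [LieAlgebra ℝ 𝔤] {B : LinearMap.BilinForm ℝ 𝔤}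

theorem isGreatest_bInv {𝔥 : Submodule ℝ 𝔤} [Module.Finite ℝ (B.orthogonal 𝔥)]
    (h𝔥 : B.orthogonal 𝔥 ≠ ⊥) :
    IsGreatest {n : ℕ | ∃ x ∈ B.orthogonal 𝔥, x ≠ 0 ∧
      n = finrank ℝ (centralizerIn (B.orthogonal 𝔥) x)} (bInv B 𝔥) := by
  set S := {n : ℕ | ∃ x ∈ B.orthogonal 𝔥, x ≠ 0 ∧
    n = finrank ℝ (centralizerIn (B.orthogonal 𝔥) x)}
  have hne : S.Nonempty := by
    obtain ⟨x, hx, hx0⟩ := Submodule.exists_mem_ne_zero_of_ne_bot h𝔥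
    exact ⟨_, x, hx, hx0, rfl⟩
  have hbdd : BddAbove S := by
    refine ⟨finrank ℝ (B.orthogonal 𝔥), ?_⟩
    rintro _ ⟨x, -, -, rfl⟩
    exact finrank_centralizerIn_le _ x
  exact ⟨Nat.sSup_mem hne hbdd, fun _ hn ↦ le_csSup hbdd hn⟩

theorem statement2_general {𝔥 𝔨 : Submodule ℝ 𝔤} [Module.Finite ℝ (B.orthogonal 𝔥)]
    (h𝔥𝔨 : 𝔥 ≤ 𝔨) (h𝔨 : B.orthogonal 𝔨 ≠ ⊥) : bInv B 𝔨 ≤ bInv B 𝔥 := by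
  have hle : B.orthogonal 𝔨 ≤ B.orthogonal 𝔥 := LinearMap.BilinForm.orthogonal_le h𝔥𝔨
  have : Module.Finite ℝ (B.orthogonal 𝔨) := Submodule.finiteDimensional_of_le hle
  obtain ⟨x, hx, hx0, hmax⟩ := (isGreatest_bInv h𝔨).1
  calc bInv B 𝔨
      = finrank ℝ (centralizerIn (B.orthogonal 𝔨) x) := hmax
    _ ≤ finrank ℝ (centralizerIn (B.orthogonal 𝔥) x) :=
        Submodule.finrank_mono (centralizerIn_mono hle x)
    _ ≤ bInv B 𝔥 := (isGreatest_bInv (ne_bot_of_le_ne_bot h𝔨 hle)).2 ⟨x, hle hx, hx0, rfl⟩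

end

/-- Let `𝔤` be a finite-dimensional real Lie algebra with an invariant inner
product and `𝔥 ⊆ 𝔨 ⊊ 𝔤` nested Lie subalgebras.  Then `b(𝔤,𝔨) ≤ b(𝔤,𝔥)`. -/
theorem statement2 {𝔤 : Type*} [LieRing 𝔤] [LieAlgebra ℝ 𝔤] [Module.Finite ℝ 𝔤]
    (B : LinearMap.BilinForm ℝ 𝔤)
    (hsymm : ∀ x y : 𝔤, B x y = B y x)
    (hposdef : ∀ x : 𝔤, x ≠ 0 → 0 < B x x)
    (hinv : ∀ x y z : 𝔤, B ⁅z, x⁆ y + B x ⁅z, y⁆ = 0)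
    (𝔥 𝔨 : LieSubalgebra ℝ 𝔤) (h𝔥𝔨 : 𝔥 ≤ 𝔨) (h𝔨 : 𝔨 ≠ ⊤) :
    bInv B 𝔨.toSubmodule ≤ bInv B 𝔥.toSubmodule :=
  statement2_general h𝔥𝔨 <|
    bilinForm_orthogonal_ne_bot B <| mt 𝔨.toSubmodule_eq_top.mp h𝔨
end

section
/- Let 𝔤 be a finite-dimensional real Lie algebra which is the direct sum of ideals 𝔤 = 𝔤₀ ⊕ 𝔤₁ ⊕ … ⊕ 𝔤_k, where 𝔤₀ is abelian and each 𝔤_i with i ≥ 1 is a simple Lie algebra. Let 𝔥 ⊊ 𝔤 be a Lie subalgebra, and let ⟨·,·⟩ and ⟪·,·⟫ be two invariant inner products on 𝔤, with 𝔭 and 𝔪 the orthogonal complements of 𝔥 with respect to ⟨·,·⟩ and ⟪·,·⟫ respectively. Then the maximum over nonzero x ∈ 𝔭 of dim{y ∈ 𝔭 : [x,y] = 0} equals the maximum over nonzero x ∈ 𝔪 of dim{y ∈ 𝔪 : [x,y] = 0}. In other words, the number b(G/H) is independent of the choice of normal homogeneous Riemannian metric on G/H. -/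
open Module

/-!
Nondegeneracy gives a unique linear bijection `T` of `𝔤` with `B x (T y) = B' x y`, and invariance
of both forms makes `T` commute with every `ad z`. Hence `T` maps the `B'`-orthogonal complement of
`𝔥` onto the `B`-orthogonal one, and although `T` need not be an automorphism of `𝔤`, it satisfies
`⁅T x, T y⁆ = T (T ⁅x, y⁆)`, so it still carries commuting pairs to commuting pairs.
-/

section BilinForm

variable {R M : Type*} [CommSemiring R] [AddCommMonoid M] [Module R M]
  {Φ Ψ : LinearMap.BilinForm R M}

theorem bilinForm_nondegenerate_of_apply_self_ne_zero (hΦ : ∀ x, x ≠ 0 → Φ x x ≠ 0) :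
    Φ.Nondegenerate :=
  ⟨fun x hx ↦ not_not.mp fun hx0 ↦ hΦ x hx0 (hx x),
    fun x hx ↦ not_not.mp fun hx0 ↦ hΦ x hx0 (hx x)⟩

theorem apply_mem_orthogonal_iff {T : M → M} (hT : ∀ x y, Φ x (T y) = Ψ x y)
    (N : Submodule R M) (y : M) : T y ∈ Φ.orthogonal N ↔ y ∈ Ψ.orthogonal N := by
  simp only [LinearMap.BilinForm.mem_orthogonal_iff, hT]

end BilinForm

theorem exists_linearEquiv_apply_apply_eq {K V : Type*} [Field K] [AddCommGroup V] [Module K V]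
    [FiniteDimensional K V] {Φ Ψ : LinearMap.BilinForm K V} (hΦ : Φ.Nondegenerate)
    (hΨ : Ψ.Nondegenerate) : ∃ T : V ≃ₗ[K] V, ∀ x y, Φ x (T y) = Ψ x y :=
  ⟨(Ψ.flip.toDual hΨ.flip).trans (Φ.flip.toDual hΦ.flip).symm, fun x y ↦
    LinearMap.BilinForm.apply_toDual_symm_apply (hB := hΦ.flip) (Ψ.flip y) x⟩

theorem map_lie_of_lieInvariant {R L M : Type*} [CommRing R] [LieRing L] [AddCommGroup M]
    [Module R M] [LieRingModule L M] {Φ Ψ : LinearMap.BilinForm R M} (hΦ : Φ.SeparatingRight)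
    (hΦ_inv : Φ.lieInvariant L) (hΨ_inv : Ψ.lieInvariant L) {T : M → M}
    (hT : ∀ x y, Φ x (T y) = Ψ x y) (z : L) (y : M) : T ⁅z, y⁆ = ⁅z, T y⁆ := by
  refine sub_eq_zero.mp (hΦ _ fun x ↦ ?_)
  calc Φ x (T ⁅z, y⁆ - ⁅z, T y⁆)
      = Ψ x ⁅z, y⁆ - Φ x ⁅z, T y⁆ := by rw [map_sub, hT]
    _ = -Ψ ⁅z, x⁆ y + Φ ⁅z, x⁆ (T y) := by rw [hΨ_inv, hΦ_inv]; abel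
    _ = 0 := by rw [hT, neg_add_cancel]

theorem lie_apply_apply_of_map_lie {L F : Type*} [LieRing L] [FunLike F L L]
    [AddMonoidHomClass F L L] {T : F} (hT : ∀ z x : L, T ⁅z, x⁆ = ⁅z, T x⁆) (x y : L) :
    ⁅T x, T y⁆ = T (T ⁅x, y⁆) :=
  calc ⁅T x, T y⁆ = T ⁅T x, y⁆ := (hT _ _).symm
    _ = T (-⁅y, T x⁆) := by rw [lie_skew]
    _ = T (T ⁅x, y⁆) := by rw [← hT, ← map_neg, lie_skew]

theorem map_orthogonal_inf_ker_ad {R L : Type*} [CommRing R] [LieRing L] [LieAlgebra R L]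
    {Φ Ψ : LinearMap.BilinForm R L} {T : L ≃ₗ[R] L} (hΦΨ : ∀ x y, Φ x (T y) = Ψ x y)
    (hT : ∀ z x : L, T ⁅z, x⁆ = ⁅z, T x⁆) (N : Submodule R L) (x : L) :
    (Ψ.orthogonal N ⊓ LinearMap.ker (LieAlgebra.ad R L x)).map (T : L →ₗ[R] L) =
      Φ.orthogonal N ⊓ LinearMap.ker (LieAlgebra.ad R L (T x)) := by
  ext w
  obtain ⟨y, rfl⟩ := T.surjective w
  simp [apply_mem_orthogonal_iff hΦΨ, lie_apply_apply_of_map_lie hT]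

theorem statement3_general {𝔤 : Type*} [LieRing 𝔤] [LieAlgebra ℝ 𝔤] [Module.Finite ℝ 𝔤]
    {B B' : LinearMap.BilinForm ℝ 𝔤} (hB : B.Nondegenerate) (hB' : B'.Nondegenerate)
    (hB_inv : B.lieInvariant 𝔤) (hB'_inv : B'.lieInvariant 𝔤) (𝔥 : Submodule ℝ 𝔤) :
    bInv B 𝔥 = bInv B' 𝔥 := by
  obtain ⟨T, hT⟩ := exists_linearEquiv_apply_apply_eq hB hB'
  have hT_lie := map_lie_of_lieInvariant hB.2 hB_inv hB'_inv hT
  unfold bInv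
  congr 1
  ext n
  rw [Set.mem_ofPred_eq, T.surjective.exists, Set.mem_ofPred_eq]
  refine exists_congr fun x ↦ ?_
  rw [apply_mem_orthogonal_iff hT, T.map_ne_zero_iff, ← map_orthogonal_inf_ker_ad hT hT_lie,
    LinearEquiv.finrank_map_eq]

/-- Let `𝔤` be a finite-dimensional real Lie algebra that is the direct sum
of ideals `𝔤 = 𝔤₀ ⊕ 𝔤₁ ⊕ … ⊕ 𝔤_k` with `𝔤₀` abelian and each `𝔤_i`, `i ≥ 1`, simple.  Let
`𝔥 ⊊ 𝔤` be a Lie subalgebra and `B`, `B'` two invariant inner products on `𝔤`.  Then the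
maximum over nonzero `x` in the `B`-orthogonal complement of `𝔥` of the dimension of the
centralizer of `x` therein coincides with the corresponding maximum for `B'`: the invariant
`b(G/H)` is independent of the choice of normal homogeneous metric. -/
theorem statement3 {𝔤 : Type*} [LieRing 𝔤] [LieAlgebra ℝ 𝔤] [Module.Finite ℝ 𝔤]
    {k : ℕ} (I : Fin (k + 1) → LieIdeal ℝ 𝔤)
    (hInternal : DirectSum.IsInternal fun i => (I i).toSubmodule)
    (habelian : IsLieAbelian ↥(I 0))
    (hsimple : ∀ i : Fin (k + 1), i ≠ 0 → LieAlgebra.IsSimple ℝ ↥(I i))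
    (𝔥 : LieSubalgebra ℝ 𝔤) (h𝔥 : 𝔥 ≠ ⊤)
    (B B' : LinearMap.BilinForm ℝ 𝔤)
    (hsymm : ∀ x y : 𝔤, B x y = B y x)
    (hposdef : ∀ x : 𝔤, x ≠ 0 → 0 < B x x)
    (hinv : ∀ x y z : 𝔤, B ⁅z, x⁆ y + B x ⁅z, y⁆ = 0)
    (hsymm' : ∀ x y : 𝔤, B' x y = B' y x)
    (hposdef' : ∀ x : 𝔤, x ≠ 0 → 0 < B' x x)
    (hinv' : ∀ x y z : 𝔤, B' ⁅z, x⁆ y + B' x ⁅z, y⁆ = 0) :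
    bInv B 𝔥.toSubmodule = bInv B' 𝔥.toSubmodule := by
  exact statement3_general
    (bilinForm_nondegenerate_of_apply_self_ne_zero fun x hx ↦ (hposdef x hx).ne')
    (bilinForm_nondegenerate_of_apply_self_ne_zero fun x hx ↦ (hposdef' x hx).ne')
    (fun z x y ↦ eq_neg_of_add_eq_zero_left (hinv x y z))
    (fun z x y ↦ eq_neg_of_add_eq_zero_left (hinv' x y z)) 𝔥.toSubmodule
end

section
/- Let 𝔤 be a finite-dimensional real Lie algebra equipped with an invariant inner product, let 𝔥 be a Lie subalgebra of 𝔤, and let 𝔭 be the orthogonal complement of 𝔥 in 𝔤. Then for every x ∈ 𝔭, dim Z_𝔤(x) ≥ 2·dim Z_𝔭(x) + dim 𝔥 − dim 𝔭, where Z_𝔤(x) = {y ∈ 𝔤 : [x,y] = 0} and Z_𝔭(x) = {y ∈ 𝔭 : [x,y] = 0}. -/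
open Module

/-!
For `x ∈ 𝔭` invariance gives `[x, 𝔥] ⊆ 𝔭`. Moreover `ad x` is skew-adjoint, so its kernel and its
range are orthogonal, and since the form is anisotropic they meet only in `0`. Hence `Z_𝔭(x)` and
`[x, 𝔥]` are independent in `𝔭`, while `Z_𝔭(x)` and `Z_𝔥(x)` are independent in `Z_𝔤(x)`. Adding the
two dimension inequalities and `dim 𝔥 = dim Z_𝔥(x) + dim [x, 𝔥]` gives the claim.
-/

universe u

section Rank

variable {R : Type*} {M M₁ : Type u} [Ring R] [HasRankNullity.{u} R]
  [AddCommGroup M] [Module R M] [AddCommGroup M₁] [Module R M₁]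

lemma rank_add_rank_le_of_disjoint {S T U : Submodule R M} (hST : Disjoint S T)
    (hS : S ≤ U) (hT : T ≤ U) :
    Module.rank R S + Module.rank R T ≤ Module.rank R U := by
  have := nontrivial_of_hasRankNullity R
  rw [← Submodule.rank_sup_add_rank_inf_eq, hST.eq_bot, rank_bot, add_zero]
  exact Submodule.rank_mono (sup_le hS hT)

lemma rank_map_add_rank_inf_ker (f : M →ₗ[R] M₁) (W : Submodule R M) :
    Module.rank R (W.map f) + Module.rank R (W ⊓ LinearMap.ker f : Submodule R M) =
      Module.rank R W := by
  rw [← LinearMap.rank_range_add_rank_ker (f.domRestrict W), LinearMap.range_domRestrict,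
    LinearMap.ker_domRestrict, ← Submodule.map_comap_subtype,
    (Submodule.equivSubtypeMap W _).rank_eq]

end Rank

section BilinForm

variable {R M : Type*} [CommRing R] [AddCommGroup M] [Module R M] {B : LinearMap.BilinForm R M}

lemma disjoint_orthogonal_of_anisotropic (hB : B.toQuadraticMap.Anisotropic)
    (W : Submodule R M) : Disjoint W (B.orthogonal W) :=
  Submodule.disjoint_def.2 fun w hw hw' ↦ hB w (hw' w hw)

lemma disjoint_range_ker_of_isSkewAdjoint (hB : B.toQuadraticMap.Anisotropic) {f : End R M}
    (hf : B.IsSkewAdjoint f) : Disjoint (LinearMap.range f) (LinearMap.ker f) := by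
  rw [Submodule.disjoint_def]
  rintro _ ⟨a, rfl⟩ (hfa : f (f a) = 0)
  refine hB (f a) ?_
  calc B (f a) (f a) = B a (-f (f a)) := hf a (f a)
    _ = 0 := by rw [hfa, neg_zero, map_zero]

lemma orthogonal_mem_invtSubmodule_of_isAdjointPair {f g : End R M}
    (hfg : LinearMap.IsAdjointPair B B f g) {W : Submodule R M} (hW : W ∈ f.invtSubmodule) :
    B.orthogonal W ∈ g.invtSubmodule :=
  fun y hy w hw ↦ (hfg w y).symm.trans (hy (f w) (hW hw))

end BilinForm

lemma two_mul_rank_orthogonal_inf_ker_add_rank_le {R : Type*} {M : Type u} [CommRing R]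
    [HasRankNullity.{u} R] [AddCommGroup M] [Module R M] {B : LinearMap.BilinForm R M}
    (hB : B.toQuadraticMap.Anisotropic) {f : End R M} (hf : B.IsSkewAdjoint f)
    {W : Submodule R M} (hW : W.map f ≤ B.orthogonal W) :
    2 * Module.rank R (B.orthogonal W ⊓ LinearMap.ker f : Submodule R M) + Module.rank R W ≤
      Module.rank R (LinearMap.ker f) + Module.rank R (B.orthogonal W) := by
  set Z : Submodule R M := B.orthogonal W ⊓ LinearMap.ker f
  have le_rank_ker :
      Module.rank R (W ⊓ LinearMap.ker f : Submodule R M) + Module.rank R Z ≤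
        Module.rank R (LinearMap.ker f) :=
    rank_add_rank_le_of_disjoint
      ((disjoint_orthogonal_of_anisotropic hB W).mono inf_le_left inf_le_left)
      inf_le_right inf_le_right
  have le_rank_orthogonal :
      Module.rank R (W.map f) + Module.rank R Z ≤ Module.rank R (B.orthogonal W) :=
    rank_add_rank_le_of_disjoint
      ((disjoint_range_ker_of_isSkewAdjoint hB hf).mono LinearMap.map_le_range inf_le_right)
      hW inf_le_left
  calc 2 * Module.rank R Z + Module.rank R W
      = (Module.rank R (W ⊓ LinearMap.ker f : Submodule R M) + Module.rank R Z) +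
          (Module.rank R (W.map f) + Module.rank R Z) := by
        rw [← rank_map_add_rank_inf_ker f W]; ring
    _ ≤ Module.rank R (LinearMap.ker f) + Module.rank R (B.orthogonal W) :=
        add_le_add le_rank_ker le_rank_orthogonal

section LieAlgebra

variable {R L : Type*} [CommRing R] [LieRing L] [LieAlgebra R L] {B : LinearMap.BilinForm R L}

lemma isSkewAdjoint_ad_of_lieInvariant (hB : B.lieInvariant L) (x : L) :
    B.IsSkewAdjoint (LieAlgebra.ad R L x) :=
  fun y z ↦ (hB x y z).trans (map_neg (B y) ⁅x, z⁆).symm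

lemma map_ad_le_orthogonal (hB : B.lieInvariant L) (H : LieSubalgebra R L) {x : L}
    (hx : x ∈ B.orthogonal H.toSubmodule) :
    H.toSubmodule.map (LieAlgebra.ad R L x : End R L) ≤ B.orthogonal H.toSubmodule := by
  rintro _ ⟨a, ha, rfl⟩
  have neg_ad_mem : -⁅a, x⁆ ∈ B.orthogonal H.toSubmodule :=
    orthogonal_mem_invtSubmodule_of_isAdjointPair (g := -LieAlgebra.ad R L a)
      (isSkewAdjoint_ad_of_lieInvariant hB a) (fun _ ↦ H.lie_mem ha) hx
  rwa [lie_skew] at neg_ad_mem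

end LieAlgebra

theorem statement7_general {R : Type*} {𝔤 : Type u} [CommRing R] [HasRankNullity.{u} R]
    [LieRing 𝔤] [LieAlgebra R 𝔤] {B : LinearMap.BilinForm R 𝔤}
    (hB : B.toQuadraticMap.Anisotropic) (hinv : B.lieInvariant 𝔤) (𝔥 : LieSubalgebra R 𝔤)
    {x : 𝔤} (hx : x ∈ B.orthogonal 𝔥.toSubmodule) :
    2 * Module.rank R (B.orthogonal 𝔥.toSubmodule ⊓ LinearMap.ker (LieAlgebra.ad R 𝔤 x) :
        Submodule R 𝔤) + Module.rank R 𝔥 ≤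
      Module.rank R (LinearMap.ker (LieAlgebra.ad R 𝔤 x)) +
        Module.rank R (B.orthogonal 𝔥.toSubmodule) :=
  two_mul_rank_orthogonal_inf_ker_add_rank_le hB (isSkewAdjoint_ad_of_lieInvariant hinv x)
    (map_ad_le_orthogonal hinv 𝔥 hx)

/-- Let `𝔤` be a finite-dimensional real Lie algebra with an invariant
inner product `B`, `𝔥` a Lie subalgebra and `𝔭` its orthogonal complement.  Then for every
`x ∈ 𝔭`, `dim Z_𝔤(x) ≥ 2 dim Z_𝔭(x) + dim 𝔥 − dim 𝔭`. -/
theorem statement7 {𝔤 : Type*} [LieRing 𝔤] [LieAlgebra ℝ 𝔤] [Module.Finite ℝ 𝔤]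
    (B : LinearMap.BilinForm ℝ 𝔤)
    (hsymm : ∀ x y : 𝔤, B x y = B y x)
    (hposdef : ∀ x : 𝔤, x ≠ 0 → 0 < B x x)
    (hinv : ∀ x y z : 𝔤, B ⁅z, x⁆ y + B x ⁅z, y⁆ = 0)
    (𝔥 : LieSubalgebra ℝ 𝔤)
    (𝔭 : Submodule ℝ 𝔤) (h𝔭 : 𝔭 = LinearMap.BilinForm.orthogonal B 𝔥.toSubmodule)
    (x : 𝔤) (hx : x ∈ 𝔭) :
    (finrank ℝ ↥(LinearMap.ker (LieAlgebra.ad ℝ 𝔤 x)) : ℤ) ≥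
      2 * (finrank ℝ ↥(𝔭 ⊓ LinearMap.ker (LieAlgebra.ad ℝ 𝔤 x)) : ℤ)
        + (finrank ℝ ↥𝔥 : ℤ) - (finrank ℝ ↥𝔭 : ℤ) := by
  subst h𝔭
  have anisotropic : B.toQuadraticMap.Anisotropic :=
    fun w hw ↦ by_contra fun hw₀ ↦ (hposdef w hw₀).ne' hw
  have lieInvariant : B.lieInvariant 𝔤 := fun z y w ↦ eq_neg_of_add_eq_zero_left (hinv y w z)
  have rank_le := statement7_general anisotropic lieInvariant 𝔥 hx
  simp only [← finrank_eq_rank] at rank_le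
  norm_cast at rank_le
  lia
end

section
/- Let V be a finite-dimensional real vector space, let Σ be a finite set of linear functionals on V, and let α₁, …, α_r be linearly independent linear functionals on V such that every λ ∈ Σ can be written as λ = Σ_i a_i α_i with real coefficients a_i that are either all ≥ 0 or all ≤ 0. Let x ∈ V satisfy α_i(x) ≥ 0 for all i, and set Φ = {α_i : α_i(x) = 0}. Then for every λ ∈ Σ one has λ(x) = 0 if and only if λ lies in the linear span of Φ. -/
/-! Evaluation at `x` is a linear map `φ` on the space of functionals which is nonnegative on the
`α i`.  When the coefficients of `λ = ∑ i, a i • α i` have a common sign, so do the terms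
`a i • φ (α i)` of `φ λ`; hence `φ λ = 0` forces each of them to vanish, that is, `λ` only
involves those `α i` with `φ (α i) = 0`. -/

section

variable {R M N ι : Type*} [Semiring R] [AddCommMonoid M] [Module R M]
  [AddCommMonoid N] [Module R N]

theorem sum_smul_eq_zero_iff_of_nonneg_or_nonpos [PartialOrder R] [PartialOrder N]
    [IsOrderedAddMonoid N] [PosSMulMono R N] [SMulPosMono R N] {s : Finset ι} {a : ι → R}
    {y : ι → N} (ha : (∀ i ∈ s, 0 ≤ a i) ∨ (∀ i ∈ s, a i ≤ 0)) (hy : ∀ i ∈ s, 0 ≤ y i) :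
    ∑ i ∈ s, a i • y i = 0 ↔ ∀ i ∈ s, a i • y i = 0 := by
  rcases ha with ha | ha
  · exact Finset.sum_eq_zero_iff_of_nonneg fun i hi => smul_nonneg (ha i hi) (hy i hi)
  · exact Finset.sum_eq_zero_iff_of_nonpos fun i hi =>
      smul_nonpos_of_nonpos_of_nonneg (ha i hi) (hy i hi)

theorem sum_smul_mem_span_of_smul_map_eq_zero [IsDomain R] [Module.IsTorsionFree R N]
    {φ : M →ₗ[R] N} {v : ι → M} {s : Finset ι} {a : ι → R} (h : ∀ i ∈ s, a i • φ (v i) = 0) :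
    ∑ i ∈ s, a i • v i ∈ Submodule.span R (v '' {i | φ (v i) = 0}) := by
  refine Submodule.sum_mem _ fun i hi => ?_
  rcases smul_eq_zero.1 (h i hi) with hai | hvi
  · rw [hai, zero_smul]
    exact Submodule.zero_mem _
  · exact Submodule.smul_mem _ _ (Submodule.subset_span (Set.mem_image_of_mem v hvi))

theorem statement11_general [IsDomain R] [PartialOrder R] [PartialOrder N]
    [IsOrderedAddMonoid N] [PosSMulMono R N] [SMulPosMono R N] [Module.IsTorsionFree R N]
    (φ : M →ₗ[R] N) (v : ι → M) (w : M)
    (hw : ∃ (s : Finset ι) (a : ι → R), w = ∑ i ∈ s, a i • v i ∧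
      ((∀ i ∈ s, 0 ≤ a i) ∨ (∀ i ∈ s, a i ≤ 0)))
    (hφ : ∀ i, 0 ≤ φ (v i)) :
    φ w = 0 ↔ w ∈ Submodule.span R (v '' {i | φ (v i) = 0}) := by
  have hspan_le_ker : Submodule.span R (v '' {i | φ (v i) = 0}) ≤ LinearMap.ker φ :=
    Submodule.span_le.2 (Set.image_subset_iff.2 fun _ hi => hi)
  refine ⟨fun hw0 => ?_, fun hmem => hspan_le_ker hmem⟩
  obtain ⟨s, a, rfl, ha⟩ := hw
  have hsum : ∑ i ∈ s, a i • φ (v i) = 0 := by simpa only [map_sum, map_smul] using hw0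
  exact sum_smul_mem_span_of_smul_map_eq_zero
    ((sum_smul_eq_zero_iff_of_nonneg_or_nonpos ha fun i _ => hφ i).1 hsum)

end

/-- Let `V` be a finite-dimensional real vector space, `S` a finite set of
linear functionals on `V`, and `α₁, …, α_r` linearly independent functionals such that every
`λ ∈ S` is a linear combination of the `α i` with coefficients all `≥ 0` or all `≤ 0`.  If
`x ∈ V` satisfies `α i x ≥ 0` for all `i`, and `Φ = {α i : α i x = 0}`, then for every
`λ ∈ S` one has `λ x = 0` iff `λ` lies in the span of `Φ`. -/
theorem statement11 {V : Type*} [AddCommGroup V] [Module ℝ V] [FiniteDimensional ℝ V]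
    (S : Set (V →ₗ[ℝ] ℝ)) (hS : S.Finite)
    {r : ℕ} (α : Fin r → (V →ₗ[ℝ] ℝ)) (hα : LinearIndependent ℝ α)
    (hdecomp : ∀ l ∈ S, ∃ a : Fin r → ℝ,
      l = ∑ i, a i • α i ∧ ((∀ i, 0 ≤ a i) ∨ (∀ i, a i ≤ 0)))
    (x : V) (hx : ∀ i, 0 ≤ α i x) :
    ∀ l ∈ S, (l x = 0 ↔ l ∈ Submodule.span ℝ {f | ∃ i, α i x = 0 ∧ f = α i}) := by
  intro l hl
  obtain ⟨a, hla, ha⟩ := hdecomp l hl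
  simpa [Set.image, eq_comm] using
    statement11_general (LinearMap.applyₗ x) α l ⟨Finset.univ, a, hla, by simpa using ha⟩ hx
end

section
/- For integers p, q and n ≥ 1, let T_n(p,q) be the n×n integer matrix with entries: T(1,1) = p+q; T(i,1) = q for 2 ≤ i ≤ n; T(i,i) = p for 2 ≤ i ≤ n; T(i,i+1) = −q for 1 ≤ i ≤ n−1; and all other entries 0. Then det T_n(p,q) = p^n + p^{n−1}q + … + p q^{n−1} + q^n = Σ_{i=0}^{n} p^{n−i} q^i. -/
/-- The `n × n` integer matrix `T_n(p,q)` (indexed by `Fin n`, so the "first" row/column is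
index `0`): `T 0 0 = p + q`; `T i 0 = q` for `i ≥ 1`; `T i i = p` for `i ≥ 1`;
`T i (i+1) = −q`; all other entries `0`. -/
def cupMatrix (n : ℕ) (p q : ℤ) : Matrix (Fin n) (Fin n) ℤ :=
  Matrix.of fun i j =>
    if (i : ℕ) = 0 ∧ (j : ℕ) = 0 then p + q
    else if (j : ℕ) = 0 then q
    else if i = j then p
    else if (j : ℕ) = (i : ℕ) + 1 then -q
    else 0

/-
Apart from its first column, `T_n(p,q)` is upper bidiagonal, so its last row has only two nonzero
entries, the first and the last. Let the first column be an arbitrary vector `a`. In the expansion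
along the last row, the minor of the last entry is a matrix of the same shape, and the minor of the
first entry is triangular with diagonal `-q`. Each new row therefore multiplies the determinant by
`p` and adds `a_n q^n`; hence the determinant is `∑ i, a_i p^(n-i) q^i`, and `a = (p + q, q, …, q)`
gives the claim.
-/

section BorderedBidiagonal

variable {R : Type*} {n : ℕ}

section Entries

variable [Zero R] [Neg R]

/-- The square matrix with first column `a` whose remaining columns are those of the upper
bidiagonal matrix with diagonal `p` and superdiagonal `-q`. Column `k.succ` meets the diagonal in
row `k.succ` and the superdiagonal in row `k.castSucc`. -/
def borderedBidiagonal (a : Fin (n + 1) → R) (p q : R) : Matrix (Fin (n + 1)) (Fin (n + 1)) R :=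
  Matrix.of fun i =>
    Fin.cons (a i) fun k => if i = k.succ then p else if i = k.castSucc then -q else 0

@[simp]
theorem borderedBidiagonal_apply_zero (a : Fin (n + 1) → R) (p q : R) (i : Fin (n + 1)) :
    borderedBidiagonal a p q i 0 = a i :=
  rfl

@[simp]
theorem borderedBidiagonal_apply_succ (a : Fin (n + 1) → R) (p q : R) (i : Fin (n + 1))
    (k : Fin n) :
    borderedBidiagonal a p q i k.succ =
      if i = k.succ then p else if i = k.castSucc then -q else 0 :=
  rfl

theorem borderedBidiagonal_submatrix_castSucc (a : Fin (n + 2) → R) (p q : R) :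
    (borderedBidiagonal a p q).submatrix Fin.castSucc Fin.castSucc =
      borderedBidiagonal (Fin.init a) p q := by
  ext i j
  cases j using Fin.cases with
  | zero => rfl
  | succ k => simp [Fin.ext_iff]

theorem borderedBidiagonal_last_castSucc_succ (a : Fin (n + 2) → R) (p q : R) (k : Fin n) :
    borderedBidiagonal a p q (Fin.last (n + 1)) k.castSucc.succ = 0 := by
  simp [Fin.ext_iff, k.isLt.ne', (k.isLt.trans n.lt_succ_self).ne']

end Entries

section Determinant

variable [CommRing R]

theorem det_borderedBidiagonal_submatrix_castSucc_succ (a : Fin (n + 1) → R) (p q : R) :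
    ((borderedBidiagonal a p q).submatrix Fin.castSucc Fin.succ).det = (-q) ^ n := by
  rw [Matrix.det_of_isLowerTriangular]
  · simp [Fin.castSucc_lt_succ.ne]
  · intro i k (hik : i < k)
    simp [hik.ne, (Fin.castSucc_lt_succ_iff.mpr hik.le).ne]

theorem det_borderedBidiagonal_succ (a : Fin (n + 2) → R) (p q : R) :
    (borderedBidiagonal a p q).det =
      p * (borderedBidiagonal (Fin.init a) p q).det + a (Fin.last (n + 1)) * q ^ (n + 1) := by
  have sign_last : (-1 : R) ^ (n + 1 + (n + 1)) = 1 := Even.neg_one_pow ⟨n + 1, rfl⟩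
  have sign_first : (-1 : R) ^ (n + 1) * (-q) ^ (n + 1) = q ^ (n + 1) := by
    rw [← mul_pow, neg_one_mul, neg_neg]
  rw [Matrix.det_succ_row _ (Fin.last (n + 1)), Fin.sum_univ_succ, Fin.sum_univ_castSucc]
  simp only [borderedBidiagonal_last_castSucc_succ, mul_zero, zero_mul, Finset.sum_const_zero,
    zero_add, Fin.succ_last, Fin.succAbove_last, Fin.succAbove_zero,
    borderedBidiagonal_submatrix_castSucc, det_borderedBidiagonal_submatrix_castSucc_succ,
    borderedBidiagonal_apply_zero, Fin.val_last, Fin.val_zero, add_zero, sign_last, one_mul]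
  have last_entry : borderedBidiagonal a p q (Fin.last (n + 1)) (Fin.last (n + 1)) = p :=
    if_pos rfl
  rw [last_entry]
  linear_combination a (Fin.last (n + 1)) * sign_first

theorem det_borderedBidiagonal (a : Fin (n + 1) → R) (p q : R) :
    (borderedBidiagonal a p q).det = ∑ i, a i * p ^ (n - i) * q ^ (i : ℕ) := by
  induction n with
  | zero => simp
  | succ n ih =>
    have pow_succ_sub (i : Fin (n + 1)) : p ^ (n + 1 - i) = p * p ^ (n - i) := by
      rw [Nat.sub_add_comm (Fin.is_le i), pow_succ']
    rw [det_borderedBidiagonal_succ, ih, Finset.mul_sum, Fin.sum_univ_castSucc (n := n + 1)]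
    congr 1
    · refine Finset.sum_congr rfl fun i _ => ?_
      rw [Fin.val_castSucc, pow_succ_sub, Fin.init]
      ring
    · simp

theorem statement14_general (p q : R) :
    (borderedBidiagonal (Fin.cons (p + q) fun _ : Fin n => q) p q).det =
      ∑ i ∈ Finset.range (n + 2), p ^ (n + 1 - i) * q ^ i := by
  rw [det_borderedBidiagonal, Fin.sum_univ_succ, Finset.sum_range_succ', Finset.sum_range_succ',
    Finset.sum_range]
  have tail_term (i : Fin n) :
      q * p ^ (n - (i + 1)) * q ^ (i + 1 : ℕ) =
        p ^ (n + 1 - (i + 1 + 1)) * q ^ (i + 1 + 1 : ℕ) := by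
    rw [Nat.add_sub_add_right]
    ring
  simp only [Fin.cons_zero, Fin.cons_succ, Fin.val_zero, Fin.val_succ, tail_term, zero_add,
    Nat.sub_zero, Nat.add_sub_cancel]
  ring

end Determinant

end BorderedBidiagonal

theorem cupMatrix_succ (n : ℕ) (p q : ℤ) :
    cupMatrix (n + 1) p q = borderedBidiagonal (Fin.cons (p + q) fun _ => q) p q := by
  ext i j
  cases j using Fin.cases with
  | zero => cases i using Fin.cases <;> simp [cupMatrix]
  | succ k =>
    have superdiagonal_iff : (k.succ : ℕ) = i + 1 ↔ i = k.castSucc := by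
      rw [Fin.val_succ, Nat.add_right_cancel_iff, eq_comm, Fin.ext_iff, Fin.val_castSucc]
    simp [cupMatrix, superdiagonal_iff, -Fin.val_succ]

/-- For integers `p, q` and `n ≥ 1`,
`det T_n(p,q) = p^n + p^{n−1}q + … + p q^{n−1} + q^n = ∑_{i=0}^{n} p^{n−i} q^i`. -/
theorem statement14 (n : ℕ) (hn : 1 ≤ n) (p q : ℤ) :
    (cupMatrix n p q).det = ∑ i ∈ Finset.range (n + 1), p ^ (n - i) * q ^ i := by
  obtain ⟨m, rfl⟩ := Nat.exists_eq_add_of_le' hn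
  rw [cupMatrix_succ, statement14_general]
end
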